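/- Let f_0 = x^a y^b in coordinates (x,y) on ℂ² with a, b ≥ 1, and let f_s be a 1-parameter holomorphic deformation of f_0 such that f_s is reduced for s ≠ 0. Then for s small enough, every connected component of the normalization of V(f_s) ∩ B_ε that is homeomorphic to a disc contains at least one point mapping to V(xy), i.e. the number of disc components of the normalization of V(f_s) ∩ B_ε is at most the total intersection number Σ_{p ∈ V(f_s) ∩ V(xy)} I_p(V(xy), V(f_s)). -/

import Mathlib

open CategoryTheory

/-- The singular chain complex of a topological space with rational coefficients, obtained by
applying the free `ℚ`-module functor to the singular simplicial set levelwise and taking the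
alternating face map complex. -/
noncomputable def singularChainComplex (X : TopCat) : ChainComplex (ModuleCat ℚ) ℕ :=
  (AlgebraicTopology.alternatingFaceMapComplex (ModuleCat ℚ)).obj
    (((CategoryTheory.SimplicialObject.whiskering (Type) (ModuleCat ℚ)).obj
      (ModuleCat.free ℚ)).obj (TopCat.toSSet.obj X))

/-- Singular homology with rational coefficients. -/
noncomputable def singularHomologyQ (X : TopCat) (n : ℕ) : ModuleCat ℚ :=
  (singularChainComplex X).homology n

/-- The Euler characteristic of a topological space, as the alternating sum of the ranks of its
rational singular homology in degrees `0`, `1`, `2`.  (For the compact surfaces considered here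
all higher homology vanishes, so this is the usual Euler characteristic.) -/
noncomputable def eulerChar (X : Type) [TopologicalSpace X] : ℤ :=
  ∑ n ∈ Finset.range 3, (-1 : ℤ) ^ n * (Module.finrank ℚ (singularHomologyQ (TopCat.of X) n) : ℤ)

/-- The gluing relation for the Möbius band: `(0, y) ~ (1, 1 - y)` on the unit square. -/
def mobiusRel (p q : unitInterval × unitInterval) : Prop :=
  p.1 = 0 ∧ q.1 = 1 ∧ p.2 = unitInterval.symm q.2

/-- The Möbius band, as a quotient of the unit square. -/
def MobiusBand : Type := Quot mobiusRel

instance : TopologicalSpace MobiusBand := by unfold MobiusBand; infer_instance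

/-- A surface is orientable iff it contains no embedded Möbius band. -/
def Orientable (S : Type) [TopologicalSpace S] : Prop :=
  ¬ ∃ f : MobiusBand → S, Topology.IsEmbedding f

/-- The standard closed disc. -/
abbrev Disc2 : Type := Metric.closedBall (0 : EuclideanSpace ℝ (Fin 2)) 1


section OpenParam

open Filter Topology Set Metric

/-- The zero set of `f` in the closed bidisc of radius `ε`. -/
def bidiscCurve (f : ℂ × ℂ → ℂ) (ε : ℝ) : Set (ℂ × ℂ) :=
  {z | ‖z.1‖ ≤ ε ∧ ‖z.2‖ ≤ ε ∧ f z = 0}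

/-- A finite-to-one parametrization `μ` of part of the curve `f = 0` in the bidisc of radius `ε`
which is open onto that curve away from the finite set `S`. -/
structure IsOpenParam {X : Type*} [TopologicalSpace X] (f : ℂ × ℂ → ℂ) (ε : ℝ)
    (S : Set (ℂ × ℂ)) (μ : X → ℂ × ℂ) : Prop where
  differentiable : Differentiable ℂ f
  continuous : Continuous μ
  mem : ∀ t, μ t ∈ bidiscCurve f ε
  finite : S.Finite
  finite_fiber : ∀ p, (μ ⁻¹' {p}).Finite
  nhdsWithin_le : ∀ t, μ t ∉ S → 𝓝[bidiscCurve f ε] (μ t) ≤ map μ (𝓝 t)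

/-- An entire function of one variable with a zero that is not identically zero has this zero
persist under holomorphic perturbation. -/
theorem nhds_le_map_fst_zeros {f : ℂ × ℂ → ℂ} (hf : Differentiable ℂ f) {p : ℂ × ℂ}
    (hp : f p = 0) (hne : ∃ y, f (p.1, y) ≠ 0) :
    𝓝 p.1 ≤ map Prod.fst (𝓝[{z | f z = 0}] p) := by
  have hslice : ∀ x, Differentiable ℂ fun y => f (x, y) := fun x => by fun_prop
  have hcont : Continuous f := hf.continuous
  have hiso : ∀ᶠ y in 𝓝[≠] p.2, f (p.1, y) ≠ 0 := by
    have han : AnalyticOnNhd ℂ (fun y => f (p.1, y)) univ :=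
      (hslice p.1).differentiableOn.analyticOnNhd isOpen_univ
    refine (han p.2 trivial).eventually_eq_zero_or_eventually_ne_zero.resolve_left fun h0 => ?_
    obtain ⟨y, hy⟩ := hne
    have := han.eq_of_eventuallyEq (g := fun _ => (0 : ℂ)) (fun _ _ => analyticAt_const) h0
    exact hy (congrFun this y)
  refine le_map fun s hs => ?_
  obtain ⟨ρ₁, hρ₁, h₁⟩ := Metric.mem_nhdsWithin_iff.1 hs
  rw [eventually_nhdsWithin_iff] at hiso
  obtain ⟨ρ₂, hρ₂, h₂⟩ := Metric.eventually_nhds_iff.1 hiso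
  set ρ := min ρ₁ ρ₂ / 2 with hρdef
  have hρ : 0 < ρ := by positivity
  have hρ₁' : ρ < ρ₁ := by have := min_le_left ρ₁ ρ₂; linarith [lt_min hρ₁ hρ₂]
  have hρ₂' : ρ < ρ₂ := by have := min_le_right ρ₁ ρ₂; linarith [lt_min hρ₁ hρ₂]
  have hev : ∀ᶠ x in 𝓝 p.1, ∀ y ∈ sphere p.2 ρ,
      2 * ‖f (x, p.2)‖ < ‖f (x, y) - f (x, p.2)‖ := by
    refine (isCompact_sphere p.2 ρ).eventually_forall_of_forall_eventually fun y hy => ?_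
    have hc : ContinuousAt (fun z : ℂ × ℂ => 2 * ‖f (z.1, p.2)‖) (p.1, y) := by fun_prop
    have hc' : ContinuousAt (fun z : ℂ × ℂ => ‖f (z.1, z.2) - f (z.1, p.2)‖) (p.1, y) := by
      fun_prop
    refine hc.eventually_lt hc' ?_
    have hyp : f (p.1, y) ≠ 0 := by
      refine h₂ ?_ ?_
      · rw [mem_sphere.1 hy]; exact hρ₂'
      · rintro rfl
        simp at hy
        exact hρ.ne hy
    simpa [hp] using hyp
  filter_upwards [hev, ball_mem_nhds p.1 hρ] with x hx hxρ
  obtain ⟨y₁, hy₁, hmin⟩ := (isCompact_sphere p.2 ρ).exists_isMinOn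
    (NormedSpace.sphere_nonempty.2 hρ.le) (f := fun y => ‖f (x, y) - f (x, p.2)‖)
    (by fun_prop)
  have hfreq : ∃ᶠ z in 𝓝 p.2, f (x, z) ≠ f (x, p.2) := by
    intro hc
    simp only [not_not] at hc
    have han : AnalyticOnNhd ℂ (fun y => f (x, y)) univ :=
      (hslice x).differentiableOn.analyticOnNhd isOpen_univ
    have := congrFun (han.eq_of_eventuallyEq (g := fun _ => f (x, p.2))
      (fun _ _ => analyticAt_const) hc) y₁
    have h3 := hx y₁ hy₁
    rw [this] at h3
    simp at h3
    linarith [norm_nonneg (f (x, p.2))]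
  obtain ⟨y, hy, hy0⟩ := (hslice x).diffContOnCl.ball_subset_image_closedBall hρ
    (fun z hz => hmin hz) hfreq
    (show (0 : ℂ) ∈ _ by
      have := hx y₁ hy₁
      rw [mem_ball, dist_zero_left]
      linarith)
  refine ⟨(x, y), h₁ ⟨?_, hy0⟩, rfl⟩
  rw [mem_ball, Prod.dist_eq]
  exact max_lt ((mem_ball.1 hxρ).trans hρ₁') ((mem_closedBall.1 hy).trans_lt hρ₁')

/-- A compact subset of the plane which is a neighborhood of all its points outside a finite set
`T` is contained in `T`. -/
theorem IsCompact.subset_of_mem_nhds_compl {K T : Set ℂ} (hK : IsCompact K) (hT : T.Finite)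
    (h : ∀ c ∈ K, c ∉ T → K ∈ 𝓝 c) : K ⊆ T := by
  have hconn : IsPreconnected Tᶜ :=
    (hT.countable.isConnected_compl_of_one_lt_rank (by simp)).isPreconnected
  have hcover : Tᶜ ⊆ interior K ∪ Kᶜ := fun c hc => by
    by_cases hcK : c ∈ K
    · exact Or.inl (mem_interior_iff_mem_nhds.2 (h c hcK hc))
    · exact Or.inr hcK
  have hdisj : Disjoint (interior K) Kᶜ :=
    disjoint_compl_right.mono_left interior_subset
  rcases hconn.subset_or_subset isOpen_interior hK.isClosed.isOpen_compl hdisj hcover with h1 | h1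
  · have huniv : (univ : Set ℂ) = K ∪ T := by
      refine (eq_univ_of_forall fun c => ?_).symm
      by_cases hc : c ∈ T
      · exact Or.inr hc
      · exact Or.inl (interior_subset (h1 hc))
    exact absurd (huniv ▸ hK.union hT.isCompact) (noncompact_univ ℂ)
  · exact compl_subset_compl.1 h1

namespace IsOpenParam

variable {X : Type*} [TopologicalSpace X] {f : ℂ × ℂ → ℂ} {ε r : ℝ} {S : Set (ℂ × ℂ)}
  {μ : X → ℂ × ℂ}

theorem swap (h : IsOpenParam f ε S μ) :
    IsOpenParam (f ∘ Prod.swap) ε (Prod.swap ⁻¹' S) (Prod.swap ∘ μ) where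
  differentiable := h.differentiable.comp (differentiable_snd.prodMk differentiable_fst)
  continuous := continuous_swap.comp h.continuous
  mem t := ⟨(h.mem t).2.1, (h.mem t).1, by simpa using (h.mem t).2.2⟩
  finite := h.finite.preimage Prod.swap_injective.injOn
  finite_fiber p := by
    refine (h.finite_fiber p.swap).subset fun t ht => ?_
    simp only [mem_preimage, mem_singleton_iff, Function.comp_apply] at ht ⊢
    rw [← ht, Prod.swap_swap]
  nhdsWithin_le t ht := by
    have htends : Tendsto Prod.swap (𝓝[bidiscCurve (f ∘ Prod.swap) ε] ((Prod.swap ∘ μ) t))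
        (𝓝[bidiscCurve f ε] (μ t)) := by
      refine tendsto_nhdsWithin_iff.2 ⟨?_, ?_⟩
      · exact (continuous_swap.tendsto' _ _ (by simp)).mono_left nhdsWithin_le_nhds
      · filter_upwards [self_mem_nhdsWithin] with z hz
        exact ⟨hz.2.1, hz.1, hz.2.2⟩
    intro A hA
    have := htends (h.nhdsWithin_le t (by simpa using ht)
      (show Prod.swap ⁻¹' A ∈ map μ (𝓝 t) from hA))
    simpa [← preimage_comp] using this

theorem nhdsWithin_fst_le (h : IsOpenParam f ε S μ) {t : X} (ht : μ t ∉ S)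
    (hlt : ‖(μ t).2‖ < ε) (hne : ∃ y, f ((μ t).1, y) ≠ 0) :
    𝓝[closedBall 0 ε] (μ t).1 ≤ map (fun t => (μ t).1) (𝓝 t) := by
  have h1 : 𝓝[closedBall 0 ε] (μ t).1 ≤ map Prod.fst (𝓝[bidiscCurve f ε] (μ t)) := by
    refine le_map fun s hs => ?_
    have h2 : {z : ℂ × ℂ | z.1 ∈ closedBall 0 ε → z ∈ s} ∈ 𝓝[{z | f z = 0}] (μ t) := by
      have hlt' : ∀ᶠ z in 𝓝 (μ t), ‖z.2‖ < ε :=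
        (continuous_snd.norm.continuousAt).eventually_lt continuousAt_const hlt
      rw [mem_nhdsWithin_iff_eventually] at hs ⊢
      filter_upwards [hs, hlt'] with z hz hzlt hz0 hz1
      exact hz ⟨by simpa using hz1, hzlt.le, hz0⟩
    have h3 := nhds_le_map_fst_zeros h.differentiable (h.mem t).2.2 hne (image_mem_map h2)
    filter_upwards [mem_nhdsWithin_of_mem_nhds h3, self_mem_nhdsWithin]
    rintro _ ⟨z, hz, rfl⟩ hz1
    exact ⟨z, hz hz1, rfl⟩
  calc _ ≤ _ := h1
    _ ≤ map Prod.fst (map μ (𝓝 t)) := map_mono (h.nhdsWithin_le t ht)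
    _ = _ := map_map

theorem exists_notMem_of_mem_nhds [T1Space X] [ConnectedSpace X] [Nontrivial X]
    (h : IsOpenParam f ε S μ) {t : X} {U : Set X} (hU : U ∈ 𝓝 t) : ∃ t' ∈ U, μ t' ∉ S := by
  by_contra! hc
  refine infinite_of_mem_nhds t hU ((h.finite.preimage' fun p _ => h.finite_fiber p).subset hc)

/-- If the first coordinate has a logarithm, then it is bounded by `r`, as soon as the curve is
a branched covering of the annulus `r < ‖x‖ ≤ ε`. -/
theorem norm_fst_le [CompactSpace X] [T1Space X] [ConnectedSpace X] [Nontrivial X]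
    (h : IsOpenParam f ε S μ) {u : X → ℂ} (hu : Continuous u)
    (hlog : ∀ t, Complex.exp (u t) = (μ t).1)
    (hr : ∀ z ∈ bidiscCurve f ε, r < ‖z.1‖ → ‖z.2‖ < ε ∧ ∃ y, f (z.1, y) ≠ 0) (t : X) :
    ‖(μ t).1‖ ≤ r := by
  by_contra! ht
  have hμ := h.continuous
  have hne0 : ∀ t, (μ t).1 ≠ 0 := fun t => hlog t ▸ Complex.exp_ne_zero _
  obtain ⟨t₀, ht₀, ht₀S⟩ : ∃ t₀, r < ‖(μ t₀).1‖ ∧ μ t₀ ∉ S :=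
    h.exists_notMem_of_mem_nhds (t := t) (U := {t | r < ‖(μ t).1‖})
      ((isOpen_lt continuous_const (by fun_prop)).mem_nhds ht)
  have hopen : ∀ t, r < ‖(μ t).1‖ → μ t ∉ S →
      𝓝[closedBall 0 ε] (μ t).1 ≤ map (fun t => (μ t).1) (𝓝 t) := fun t h1 h2 =>
    h.nhdsWithin_fst_le h2 (hr _ (h.mem t) h1).1 (hr _ (h.mem t) h1).2
  -- a circle meeting the parametrized part and avoiding `S`
  obtain ⟨t₁, ht₁, hS⟩ : ∃ t₁, r < ‖(μ t₁).1‖ ∧ ∀ t, ‖(μ t).1‖ = ‖(μ t₁).1‖ → μ t ∉ S := by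
    set R : Set ℝ := (fun z : ℂ × ℂ => ‖z.1‖) '' S
    have hR : R.Finite := h.finite.image _
    have hρ : Tendsto (fun θ : ℝ => (1 - θ) • (μ t₀).1) (𝓝[>] 0)
        (𝓝[closedBall 0 ε] (μ t₀).1) := by
      refine tendsto_nhdsWithin_iff.2 ⟨?_, ?_⟩
      · refine (Continuous.tendsto' ?_ _ _ (by simp)).mono_left nhdsWithin_le_nhds
        fun_prop
      · filter_upwards [Ioo_mem_nhdsGT (zero_lt_one (α := ℝ))] with θ hθ
        rw [mem_closedBall_zero_iff, norm_smul, Real.norm_of_nonneg (by linarith [hθ.2])]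
        nlinarith [(h.mem t₀).1, norm_nonneg (μ t₀).1, hθ.1, hθ.2]
    have himg := hρ.eventually (hopen t₀ ht₀ ht₀S (image_mem_map
      ((isOpen_lt continuous_const (by fun_prop)).mem_nhds ht₀ :
        {t | r < ‖(μ t).1‖} ∈ 𝓝 t₀)))
    have hinf : ∃ᶠ θ in 𝓝[>] (0 : ℝ), ‖(1 - θ) • (μ t₀).1‖ ∉ R := by
      refine Eventually.frequently ?_
      have hfin : {θ ∈ Ioo (0 : ℝ) 1 | ‖(1 - θ) • (μ t₀).1‖ ∈ R}.Finite := by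
        refine Finite.of_finite_image (f := fun θ : ℝ => ‖(1 - θ) • (μ t₀).1‖)
          (hR.subset ?_) ?_
        · rintro _ ⟨θ, hθ, rfl⟩
          exact hθ.2
        · intro θ hθ θ' hθ' heq
          simp only [norm_smul] at heq
          have := mul_right_cancel₀ (norm_ne_zero_iff.2 (hne0 t₀)) heq
          rw [Real.norm_of_nonneg (by linarith [hθ.1.2]),
            Real.norm_of_nonneg (by linarith [hθ'.1.2])] at this
          linarith
      have hcl := hfin.isClosed.isOpen_compl.mem_nhds
        (show (0 : ℝ) ∈ {θ ∈ Ioo (0 : ℝ) 1 | ‖(1 - θ) • (μ t₀).1‖ ∈ R}ᶜ by simp)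
      filter_upwards [mem_nhdsWithin_of_mem_nhds hcl,
        Ioo_mem_nhdsGT (zero_lt_one (α := ℝ))] with θ h1 h2 h3
      exact h1 ⟨h2, h3⟩
    obtain ⟨θ, hθR, t₁, ht₁, heq⟩ := (hinf.and_eventually himg).exists
    refine ⟨t₁, ht₁, fun t htt hmem => hθR ?_⟩
    rw [← heq]
    exact ⟨μ t, hmem, htt⟩
  -- the argument has a maximum over this circle, but it can always be increased
  have hC : IsCompact {t | ‖(μ t).1‖ = ‖(μ t₁).1‖} :=
    (isClosed_eq (by fun_prop) continuous_const).isCompact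
  obtain ⟨q, hq, hmax⟩ := hC.exists_isMaxOn ⟨t₁, rfl⟩
    (Complex.continuous_im.comp hu).continuousOn
  have hq' : ‖(μ q).1‖ = ‖(μ t₁).1‖ := hq
  have hrot : Tendsto (fun θ : ℝ => (μ q).1 * Complex.exp (θ * Complex.I)) (𝓝[>] 0)
      (𝓝[closedBall 0 ε] (μ q).1) := by
    refine tendsto_nhdsWithin_iff.2 ⟨?_, ?_⟩
    · refine (Continuous.tendsto' ?_ _ _ (by simp)).mono_left nhdsWithin_le_nhds
      fun_prop
    · refine Eventually.of_forall fun θ => ?_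
      simpa [Complex.norm_exp_ofReal_mul_I] using (h.mem q).1
  have himg := hrot.eventually (hopen q (hq' ▸ ht₁) (hS q hq') (image_mem_map
    (hu.continuousAt.preimage_mem_nhds (ball_mem_nhds (u q) one_pos))))
  obtain ⟨θ, ⟨t', ht', heq⟩, hθ⟩ :=
    (himg.and (Ioo_mem_nhdsGT (zero_lt_one (α := ℝ)))).exists
  have hnorm : ‖(μ t').1‖ = ‖(μ t₁).1‖ := by
    simp only at heq
    rw [heq, norm_mul, Complex.norm_exp_ofReal_mul_I, mul_one, hq']
  have hexp : Complex.exp (u t') = Complex.exp (u q + θ * Complex.I) := by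
    rw [Complex.exp_add, hlog, hlog]; exact heq
  obtain ⟨n, hn⟩ := Complex.exp_eq_exp_iff_exists_int.1 hexp
  have him := congrArg Complex.im hn
  simp at him
  have hclose : |(u t').im - (u q).im| < 1 := by
    have h1 : ‖u t' - u q‖ < 1 := by simpa [dist_eq_norm] using ht'
    have h2 := Complex.abs_im_le_norm (u t' - u q)
    rw [Complex.sub_im] at h2
    linarith
  have hle : (u t').im ≤ (u q).im := hmax hnorm
  have hπ := Real.pi_gt_three
  rw [abs_lt] at hclose
  have hn1 : (n : ℝ) < 0 := by
    by_contra! hn0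
    nlinarith [hθ.1]
  have hn2 : (n : ℝ) ≤ -1 := by
    have : n < 0 := by exact_mod_cast hn1
    exact_mod_cast (by omega : n ≤ -1)
  nlinarith [hθ.2]

/-- If the parametrized part stays in the interior of the bidisc, then its first coordinate takes
only finitely many values. -/
theorem range_fst_subset [CompactSpace X] (h : IsOpenParam f ε S μ)
    (h1 : ∀ t, ‖(μ t).1‖ < ε) (h2 : ∀ t, ‖(μ t).2‖ < ε) :
    range (fun t => (μ t).1) ⊆ Prod.fst '' S := by
  have hμ := h.continuous
  have hline : ∀ t, μ t ∉ S → ∃ y, f ((μ t).1, y) ≠ 0 := by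
    intro t ht
    by_contra! hzero
    have hK : IsCompact {y | ((μ t).1, y) ∈ range μ} := by
      have hcl : IsClosed {y | ((μ t).1, y) ∈ range μ} :=
        (isCompact_range hμ).isClosed.preimage (by fun_prop)
      refine (isCompact_closedBall (0 : ℂ) ε).of_isClosed_subset hcl ?_
      rintro y ⟨t', ht'⟩
      have := (h2 t').le
      rw [ht'] at this
      simpa using this
    refine (fun hm => ht ?_ : ¬ (μ t).2 ∈ {y | ((μ t).1, y) ∈ S})
      (hK.subset_of_mem_nhds_compl (h.finite.preimage (Prod.mk_right_injective _).injOn) ?_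
        ⟨t, rfl⟩)
    · exact hm
    · rintro y ⟨t', ht'⟩ hy
      have hmem : range μ ∈ 𝓝[bidiscCurve f ε] (μ t') :=
        h.nhdsWithin_le t' (by rw [ht']; exact hy) (range_mem_map)
      have htends : Tendsto (fun y => ((μ t).1, y)) (𝓝 y) (𝓝[bidiscCurve f ε] (μ t')) := by
        refine tendsto_nhdsWithin_iff.2 ⟨?_, ?_⟩
        · rw [ht']
          exact Continuous.tendsto (by fun_prop) y
        · have hy2 : ‖y‖ < ε := by simpa [ht'] using h2 t'
          filter_upwards [continuous_norm.continuousAt.eventually_lt continuousAt_const hy2]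
            with w hw
          exact ⟨(h1 t).le, hw.le, hzero w⟩
      exact htends hmem
  refine (isCompact_range (by fun_prop)).subset_of_mem_nhds_compl (h.finite.image _) ?_
  rintro _ ⟨t, rfl⟩ ht
  have htS : μ t ∉ S := fun hm => ht ⟨_, hm, rfl⟩
  have := h.nhdsWithin_fst_le htS (h2 t) (hline t htS) range_mem_map
  rwa [nhdsWithin_eq_nhds.2] at this
  filter_upwards [continuous_norm.continuousAt.eventually_lt continuousAt_const (h1 t)] with w hw
  simpa using hw.le

end IsOpenParam

/-- A nowhere vanishing continuous function on a simply connected, locally path connected space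
has a continuous logarithm. -/
theorem exists_continuous_exp_eq {X : Type*} [TopologicalSpace X] [SimplyConnectedSpace X]
    [LocallyPathConnectedSpace X] {g : X → ℂ} (hg : Continuous g) (h0 : ∀ x, g x ≠ 0) :
    ∃ u : X → ℂ, Continuous u ∧ ∀ x, Complex.exp (u x) = g x := by
  obtain ⟨x₀⟩ : Nonempty X := inferInstance
  obtain ⟨u, ⟨-, hu⟩, -⟩ := Complex.isCoveringMapOn_exp.existsUnique_continuousMap_lifts
    ⟨g, hg⟩ (a₀ := x₀) (Complex.exp_log (h0 x₀)) h0
  exact ⟨u, map_continuous u, congrFun hu⟩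

theorem eventually_forall_ne_zero {F : ℂ → ℂ × ℂ → ℂ}
    (hF : Continuous fun p : ℂ × (ℂ × ℂ) => F p.1 p.2) {K : Set (ℂ × ℂ)} (hK : IsCompact K)
    (h0 : ∀ z ∈ K, F 0 z ≠ 0) : ∀ᶠ s in 𝓝 0, ∀ z ∈ K, F s z ≠ 0 :=
  hK.eventually_forall_of_forall_eventually fun z hz =>
    hF.continuousAt.eventually_ne (h0 z hz)

/-- On a nontrivial compact, simply connected space, an open parametrization of part of a curve
meets one of the axes, as soon as the curve is a branched covering of the annuli
`ε / 2 ≤ ‖x‖ ≤ ε` and `ε / 2 ≤ ‖y‖ ≤ ε` of the axes. -/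
theorem IsOpenParam.exists_fst_eq_zero_or_snd_eq_zero {X : Type*} [TopologicalSpace X]
    [CompactSpace X] [T1Space X] [SimplyConnectedSpace X] [LocallyPathConnectedSpace X]
    [Nontrivial X] {f : ℂ × ℂ → ℂ} {ε : ℝ} {S : Set (ℂ × ℂ)} {μ : X → ℂ × ℂ}
    (h : IsOpenParam f ε S μ) (hε : 0 < ε)
    (h1 : ∀ x y : ℂ, ε / 2 ≤ ‖x‖ → ‖x‖ ≤ ε → ‖y‖ = ε → f (x, y) ≠ 0)
    (h2 : ∀ x y : ℂ, ε / 2 ≤ ‖y‖ → ‖y‖ ≤ ε → ‖x‖ = ε → f (x, y) ≠ 0) :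
    ∃ t, (μ t).1 = 0 ∨ (μ t).2 = 0 := by
  by_contra! hne
  have hμ := h.continuous
  have hnormε : ‖(ε : ℂ)‖ = ε := by simp [abs_of_pos hε]
  have hfst : ∀ t, ‖(μ t).1‖ ≤ ε / 2 := by
    obtain ⟨u, hu, hexp⟩ := exists_continuous_exp_eq (g := fun t => (μ t).1) (by fun_prop)
      fun t => (hne t).1
    refine h.norm_fst_le hu hexp fun z hz hlt => ⟨hz.2.1.lt_of_ne fun heq => ?_, ε, ?_⟩
    · exact h1 z.1 z.2 hlt.le hz.1 heq hz.2.2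
    · exact h1 _ _ hlt.le hz.1 hnormε
  have hsnd : ∀ t, ‖(μ t).2‖ ≤ ε / 2 := by
    obtain ⟨u, hu, hexp⟩ := exists_continuous_exp_eq (g := fun t => (μ t).2) (by fun_prop)
      fun t => (hne t).2
    refine h.swap.norm_fst_le hu hexp fun z hz hlt => ⟨hz.2.1.lt_of_ne fun heq => ?_, ε, ?_⟩
    · exact h2 z.2 z.1 hlt.le hz.1 heq hz.2.2
    · exact h2 _ _ hlt.le hz.1 hnormε
  have hfst' : ∀ t, ‖(μ t).1‖ < ε := fun t => (hfst t).trans_lt (half_lt_self hε)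
  have hsnd' : ∀ t, ‖(μ t).2‖ < ε := fun t => (hsnd t).trans_lt (half_lt_self hε)
  have hrange : range μ ⊆ (Prod.fst '' S) ×ˢ (Prod.fst '' (Prod.swap ⁻¹' S)) := by
    rintro _ ⟨t, rfl⟩
    exact ⟨h.range_fst_subset hfst' hsnd' ⟨t, rfl⟩, h.swap.range_fst_subset hsnd' hfst' ⟨t, rfl⟩⟩
  have hfin : (range μ).Finite :=
    ((h.finite.image _).prod (h.swap.finite.image _)).subset hrange
  obtain ⟨t⟩ : Nonempty X := inferInstance
  refine infinite_of_mem_nhds t univ_mem ((hfin.preimage' fun p _ => h.finite_fiber p).subset ?_)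
  exact fun t _ => ⟨t, rfl⟩

/-- A map from a compact space onto a curve, with finite fibers and bijective away from a finite
set, restricts on an open subset to an open parametrization. -/
theorem isOpenParam_of_bijOn {X N : Type*} [TopologicalSpace X] [TopologicalSpace N]
    [CompactSpace N] {f : ℂ × ℂ → ℂ} {ε : ℝ} {S : Set (ℂ × ℂ)} {ν : N → ℂ × ℂ} {i : X → N}
    (hf : Differentiable ℂ f) (hν : Continuous ν) (hrange : range ν = bidiscCurve f ε)
    (hfib : ∀ p, (ν ⁻¹' {p}).Finite) (hS : S.Finite)
    (hbij : BijOn ν (ν ⁻¹' (range ν \ S)) (range ν \ S)) (hi : IsOpenEmbedding i) :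
    IsOpenParam f ε S (ν ∘ i) where
  differentiable := hf
  continuous := hν.comp hi.continuous
  mem t := hrange ▸ mem_range_self (i t)
  finite := hS
  finite_fiber p := by
    rw [preimage_comp]
    exact (hfib p).preimage hi.injective.injOn
  nhdsWithin_le t ht := by
    rw [← map_map, hi.map_nhds_eq]
    refine le_map fun s hs => ?_
    have hcl : IsClosed (ν '' (interior s)ᶜ) :=
      (isOpen_interior.isClosed_compl.isCompact.image hν).isClosed
    have hnot : ν (i t) ∉ ν '' (interior s)ᶜ := by
      rintro ⟨q, hq, heq⟩
      have : q = i t := hbij.injOn ⟨mem_range_self q, by rw [heq]; exact ht⟩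
        ⟨mem_range_self _, ht⟩ heq
      exact hq (this ▸ mem_interior_iff_mem_nhds.2 hs)
    filter_upwards [mem_nhdsWithin_of_mem_nhds (hcl.isOpen_compl.mem_nhds hnot),
      self_mem_nhdsWithin] with z hz hzc
    rw [← hrange] at hzc
    obtain ⟨q, rfl⟩ := hzc
    by_contra hq
    exact hz ⟨q, fun hqs => hq ⟨q, interior_subset hqs, rfl⟩, rfl⟩

end OpenParam

/-- The local normal crossings estimate (Lemma 4.1), qualitative form: for a holomorphic
deformation `f_s` of `f_0 = x^a y^b` which is reduced (square-free at every point of its zero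
set) for `s ≠ 0`, and for `s` small enough, every connected component of the normalization of
`V(f_s) ∩ B_ε` which is homeomorphic to a disc contains a point mapping to `V(xy)`.  Here a
normalization of the curve is a compact surface with boundary mapping continuously and
finite-to-one onto the curve, bijectively away from a finite set. -/
theorem disc_components_meet_axes (a b : ℕ) (ha : 1 ≤ a) (hb : 1 ≤ b)
    (ε : ℝ) (hε : 0 < ε)
    (F : ℂ → ℂ × ℂ → ℂ)
    (hF : AnalyticOnNhd ℂ (fun p : ℂ × (ℂ × ℂ) => F p.1 p.2) Set.univ)
    (hF0 : ∀ z : ℂ × ℂ, F 0 z = z.1 ^ a * z.2 ^ b)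
    (hred : ∀ s : ℂ, s ≠ 0 → ∀ p : ℂ × ℂ, F s p = 0 →
      ¬ ∃ g h : ℂ × ℂ → ℂ, AnalyticAt ℂ g p ∧ AnalyticAt ℂ h p ∧ g p = 0 ∧
        ∀ᶠ z in nhds p, F s z = g z ^ 2 * h z) :
    ∃ s₀ > (0 : ℝ), ∀ s : ℂ, s ≠ 0 → ‖s‖ < s₀ →
      ∀ (N : Type) [TopologicalSpace N] [T2Space N] [CompactSpace N]
        [ChartedSpace (EuclideanHalfSpace 2) N]
        (ν : N → ℂ × ℂ),
        Continuous ν →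
        Set.range ν = {z : ℂ × ℂ | z ∈ Metric.closedBall 0 ε ∧ F s z = 0} →
        (∀ p : ℂ × ℂ, (ν ⁻¹' {p}).Finite) →
        (∃ Fs : Set (ℂ × ℂ), Fs.Finite ∧
          Set.BijOn ν (ν ⁻¹' (Set.range ν \ Fs)) (Set.range ν \ Fs)) →
        ∀ x : N, Nonempty (↥(connectedComponent x) ≃ₜ Disc2) →
          ∃ u ∈ connectedComponent x, (ν u).1 = 0 ∨ (ν u).2 = 0 := by
  have hcont : Continuous fun p : ℂ × (ℂ × ℂ) => F p.1 p.2 := hF.continuous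
  have hdiff : ∀ s, Differentiable ℂ (F s) := fun s z =>
    (hF (s, z) trivial).differentiableAt.comp z
      ((differentiableAt_const s).prodMk differentiableAt_id)
  have hA : IsCompact (Metric.closedBall (0 : ℂ) ε \ Metric.ball 0 (ε / 2)) :=
    (isCompact_closedBall 0 ε).diff Metric.isOpen_ball
  have hB : IsCompact (Metric.sphere (0 : ℂ) ε) := isCompact_sphere 0 ε
  have hAne : ∀ z ∈ Metric.closedBall (0 : ℂ) ε \ Metric.ball 0 (ε / 2), z ≠ 0 := by
    rintro z hz rfl
    exact hz.2 (Metric.mem_ball_self (half_pos hε))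
  have hBne : ∀ z ∈ Metric.sphere (0 : ℂ) ε, z ≠ 0 := fun z hz =>
    ne_zero_of_mem_sphere hε.ne' ⟨z, hz⟩
  have h1 := eventually_forall_ne_zero hcont (hA.prod hB) fun z hz => by
    rw [hF0]
    exact mul_ne_zero (pow_ne_zero _ (hAne _ hz.1)) (pow_ne_zero _ (hBne _ hz.2))
  have h2 := eventually_forall_ne_zero hcont (hB.prod hA) fun z hz => by
    rw [hF0]
    exact mul_ne_zero (pow_ne_zero _ (hBne _ hz.1)) (pow_ne_zero _ (hAne _ hz.2))
  obtain ⟨s₀, hs₀, hs⟩ := Metric.eventually_nhds_iff.1 (h1.and h2)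
  refine ⟨s₀, hs₀, fun s _ hlt N _ _ _ _ ν hν hrange hfib ⟨S, hS, hbij⟩ x ⟨e⟩ => ?_⟩
  obtain ⟨hs1, hs2⟩ := hs (show dist s 0 < s₀ by simpa using hlt)
  have hrange' : Set.range ν = bidiscCurve (F s) ε := by
    rw [hrange]
    ext z
    simp [bidiscCurve, Prod.norm_def, and_assoc]
  have : LocallyConnectedSpace N :=
    ChartedSpace.locallyConnectedSpace (EuclideanHalfSpace 2) N
  have hi : Topology.IsOpenEmbedding fun t : Disc2 => (e.symm t : N) :=
    (isOpen_connectedComponent (x := x)).isOpenEmbedding_subtypeVal.comp e.symm.isOpenEmbedding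
  have hconv : Convex ℝ (Metric.closedBall (0 : EuclideanSpace ℝ (Fin 2)) 1) :=
    convex_closedBall _ _
  have : ContractibleSpace Disc2 := hconv.contractibleSpace ⟨0, by simp⟩
  have : LocallyPathConnectedSpace Disc2 := hconv.locallyPathConnectedSpace
  have : Nontrivial Disc2 :=
    ⟨⟨0, by simp⟩, ⟨EuclideanSpace.single 0 1, by simp⟩, fun h => by
      simpa using congrArg (fun v : Disc2 => (v : EuclideanSpace ℝ (Fin 2)) 0) h⟩
  obtain ⟨t, ht⟩ := (isOpenParam_of_bijOn (hdiff s) hν hrange' hfib hS hbij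
    hi).exists_fst_eq_zero_or_snd_eq_zero hε
    (fun u v hu hu' hv => hs1 (u, v) ⟨⟨by simpa using hu', by simpa using hu⟩, by simpa using hv⟩)
    (fun u v hv hv' hu => hs2 (u, v) ⟨by simpa using hu, by simpa using hv', by simpa using hv⟩)
  exact ⟨e.symm t, (e.symm t).2, ht⟩
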